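/- Let n ≥ 80. If the statements T(n, 0; 96, 96, 96) and T(n−24, 96; t(n−48), t(n−48), 0) are true, then the statement T(n, 96; t(n−24), t(n−24), 0) is true. -/

import Mathlib

open MvPolynomial

/-- The linear form associated with a coefficient vector `v ∈ ℂ^{n+1}`. -/
noncomputable def lin {n : ℕ} (v : Fin (n + 1) → ℂ) : MvPolynomial (Fin (n + 1)) ℂ :=
  ∑ j, MvPolynomial.C (v j) * MvPolynomial.X j

/-- The subspace `f·U = {f·u : u ∈ U}` of the polynomial ring, where `U` is the
space of linear forms. -/
noncomputable def mulU {n : ℕ} (f : MvPolynomial (Fin (n + 1)) ℂ) :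
    Submodule ℂ (MvPolynomial (Fin (n + 1)) ℂ) :=
  Submodule.span ℂ (Set.range fun j : Fin (n + 1) => f * MvPolynomial.X j)

/-- The affine cone `ℓ^{d-1}·U + ℓ^{d-2}·m·U` over the tangent space to the tangential
variety `T_{n,d}` of the `d`-th Veronese variety at the point `[ℓ^{d-1} m]`. -/
noncomputable def tanCone {n : ℕ} (d : ℕ) (ℓ m : Fin (n + 1) → ℂ) :
    Submodule ℂ (MvPolynomial (Fin (n + 1)) ℂ) :=
  mulU (lin ℓ ^ (d - 1)) ⊔ mulU (lin ℓ ^ (d - 2) * lin m)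

/-- `v ∈ U_{i+1}`, i.e. the coordinates of `v` indexed by `{24i, …, 24i+23}` vanish. -/
def memU {n : ℕ} (i : Fin 3) (v : Fin (n + 1) → ℂ) : Prop :=
  ∀ j : Fin (n + 1), 24 * (i : ℕ) ≤ (j : ℕ) → (j : ℕ) < 24 * (i : ℕ) + 24 → v j = 0

/-- `S_3(U_{i+1})`: the span of all products of three linear forms belonging to `U_{i+1}`. -/
noncomputable def S3U {n : ℕ} (i : Fin 3) : Submodule ℂ (MvPolynomial (Fin (n + 1)) ℂ) :=
  Submodule.span ℂ
    {p | ∃ a b c : Fin (n + 1) → ℂ,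
      memU i a ∧ memU i b ∧ memU i c ∧ p = lin a * lin b * lin c}

/-- `v ∈ U_K`, the span of the variables `x_0, …, x_71`. -/
def memK {n : ℕ} (v : Fin (n + 1) → ℂ) : Prop :=
  ∀ j : Fin (n + 1), 72 ≤ (j : ℕ) → v j = 0

/-- `S_3(U_K)`: the span of all products of three linear forms in `x_0, …, x_71`. -/
noncomputable def S3K (n : ℕ) : Submodule ℂ (MvPolynomial (Fin (n + 1)) ℂ) :=
  Submodule.span ℂ
    {p | ∃ a b c : Fin (n + 1) → ℂ,
      memK a ∧ memK b ∧ memK c ∧ p = lin a * lin b * lin c}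

/-- The alternating sum `Σ_{j=1}^k (−1)^{j−1} C(k,j) · C(n−24j+3, 3)` (with the convention
`C(m,3) = 0` for `m < 3`, realized by truncated subtraction `n+3−24j`). -/
def altsum (n k : ℕ) : ℤ :=
  ∑ j ∈ Finset.Icc 1 k, (-1 : ℤ) ^ (j - 1) * (k.choose j : ℤ) * ((n + 3 - 24 * j).choose 3 : ℤ)

/-- `k = #{i : a_i ≠ 0}`. -/
def kcount (a : Fin 3 → ℕ) : ℕ := (Finset.univ.filter fun i => a i ≠ 0).card

/-- The expected dimension `w(n, s; a_1, a_2, a_3)`, as an integer. -/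
def expdimZ (n s : ℕ) (a : Fin 3 → ℕ) : ℤ :=
  min (altsum n (kcount a) + 48 * ((a 0 + a 1 + a 2 : ℕ) : ℤ) + (2 * n + 1) * s)
    (((n + 3).choose 3 : ℤ))

/-- The subspace `W(n, s; a_1, a_2, a_3)` determined by the given points. -/
noncomputable def Wspace {n s : ℕ} {a : Fin 3 → ℕ}
    (ℓ m : Fin s → Fin (n + 1) → ℂ)
    (ℓ' m' : (i : Fin 3) → Fin (a i) → Fin (n + 1) → ℂ) :
    Submodule ℂ (MvPolynomial (Fin (n + 1)) ℂ) :=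
  (⨆ i : {i : Fin 3 // a i ≠ 0},
      (S3U i.1 ⊔ ⨆ j : Fin (a i.1), tanCone 3 (ℓ' i.1 j) (m' i.1 j)))
    ⊔ ⨆ i : Fin s, tanCone 3 (ℓ i) (m i)

/-- The statement `T(n, s; a_1, a_2, a_3)`: some choice of points realizes the expected
dimension `w(n, s; a_1, a_2, a_3)`. -/
def TStmt (n s : ℕ) (a : Fin 3 → ℕ) : Prop :=
  ∃ (ℓ m : Fin s → Fin (n + 1) → ℂ)
    (ℓ' m' : (i : Fin 3) → Fin (a i) → Fin (n + 1) → ℂ),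
    (∀ (i : Fin 3) (j : Fin (a i)), memU i (ℓ' i j) ∧ memU i (m' i j)) ∧
    (Module.finrank ℂ (Wspace ℓ m ℓ' m') : ℤ) = expdimZ n s a

/-- `s_1(n) = 48k² + (11+4r)k + ⌊(4r²+22r+33)/48⌋` where `n = 24k + r`. -/
def s1 (n : ℕ) : ℕ :=
  48 * (n / 24) ^ 2 + (11 + 4 * (n % 24)) * (n / 24) +
    (4 * (n % 24) ^ 2 + 22 * (n % 24) + 33) / 48

/-- `s_2(n) = s_1(n) + 1`. -/
def s2 (n : ℕ) : ℕ := s1 n + 1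

/-- `t(n) = 4n − 37`. -/
def tfun (n : ℕ) : ℕ := 4 * n - 37

/-- The expected codimension `c(n)` of `W(n, t(n); s_1(n−24), 0, 0)`. -/
def cInt (n : ℕ) : ℤ :=
  ((n + 3).choose 3 : ℤ) - ((n - 21).choose 3 : ℤ) - (tfun n : ℤ) * (2 * n + 1) -
    48 * (s1 (n - 24) : ℤ)

/-!
Both hypotheses and the conclusion assert that some `W` is the space of all cubics. Write
`m = n - 24`; since `24³` is the number of missing cubics, `T(n, 0; 96, 96, 96)` supplies 96 points
in each block, while `T(m, 96; t(m-24), t(m-24), 0)` lives on `U₃`, identified with the linear forms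
in `m + 1` variables. Spanning all cubics is a Zariski open condition on the points. Move the 96
points of the third block along the lines in `U₃` that join them to the 96 free points of the second
configuration: all but finitely many positions keep both configurations spanning. At a common
position, the points of the second configuration fill `S₃(U₃)`, so the block `S₃(U₃)` may be dropped
from the first one, whose third-block points become free points. As `t(m) = 96 + t(m-24)`, the union
of the two configurations has the required shape.
-/

section PolynomialFamilies

open Filter Polynomial

variable {R A : Type*} [CommRing R] [CommRing A] [Algebra R A]

/-- The value at the scalar `t` of the polynomial curve in `A` with coefficients those of `F`. -/
noncomputable def curveEval (t : R) : A[X] →ₗ[R] A :=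
  (Polynomial.leval (algebraMap R A t)).restrictScalars R

lemma curveEval_apply (t : R) (F : A[X]) : curveEval t F = F.eval (algebraMap R A t) := rfl

lemma exists_eval_eq_apply_curveEval (φ : A →ₗ[R] R) (F : A[X]) :
    ∃ p : R[X], ∀ t, p.eval t = φ (curveEval t F) := by
  induction F using Polynomial.induction_on' with
  | add F G hF hG =>
    obtain ⟨p, hp⟩ := hF
    obtain ⟨q, hq⟩ := hG
    exact ⟨p + q, fun t => by rw [Polynomial.eval_add, hp, hq, map_add, map_add]⟩
  | monomial n a =>
    refine ⟨Polynomial.monomial n (φ a), fun t => ?_⟩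
    rw [Polynomial.eval_monomial, curveEval_apply, Polynomial.eval_monomial, ← map_pow,
      mul_comm a, ← Algebra.smul_def, map_smul, smul_eq_mul, mul_comm]

/-- `V` is a polynomial family of subspaces of `A`: a single subspace of polynomial curves in `A`
takes the value `V t` at every scalar `t`. -/
def IsPolynomialFamily (V : R → Submodule R A) : Prop :=
  ∃ S : Submodule R A[X], ∀ t, V t = S.map (curveEval t)

namespace IsPolynomialFamily

lemma span {ι : Type*} (F : ι → A[X]) :
    IsPolynomialFamily fun t : R => Submodule.span R (Set.range fun i => curveEval t (F i)) :=
  ⟨Submodule.span R (Set.range F), fun t => by rw [Submodule.map_span, ← Set.range_comp]; rfl⟩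

lemma const (K : Submodule R A) : IsPolynomialFamily fun _ : R => K := by
  simpa [curveEval_apply] using span (R := R) fun x : K => Polynomial.C (x : A)

lemma sup {V W : R → Submodule R A} (hV : IsPolynomialFamily V) (hW : IsPolynomialFamily W) :
    IsPolynomialFamily fun t => V t ⊔ W t := by
  obtain ⟨S, hS⟩ := hV
  obtain ⟨T, hT⟩ := hW
  exact ⟨S ⊔ T, fun t => by simp only [hS, hT, Submodule.map_sup]⟩

lemma iSup {ι : Sort*} {V : ι → R → Submodule R A} (hV : ∀ i, IsPolynomialFamily (V i)) :
    IsPolynomialFamily fun t => ⨆ i, V i t := by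
  choose S hS using hV
  exact ⟨⨆ i, S i, fun t => by simp_rw [hS, Submodule.map_iSup]⟩

end IsPolynomialFamily

variable {k : Type*} [Field k] [Algebra k A]

lemma exists_eval_eq_det_toMatrix {ι : Type*} [Fintype ι] [DecidableEq ι] {E : Submodule k A}
    (e : Module.Basis ι k E) (G : ι → A[X]) (v : k → ι → E)
    (hv : ∀ t i, (v t i : A) = curveEval t (G i)) :
    ∃ p : k[X], ∀ t, p.eval t = (e.toMatrix (v t)).det := by
  choose φ hφ using fun i => LinearMap.exists_extend (e.coord i)
  choose P hP using fun i j => exists_eval_eq_apply_curveEval (φ i) (G j)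
  refine ⟨(Matrix.of P).det, fun t => ?_⟩
  rw [← Polynomial.coe_evalRingHom, RingHom.map_det]
  congr 1
  ext i j
  calc (P i j).eval t = φ i (v t j) := by rw [hP, hv]
    _ = e.toMatrix (v t) i j := LinearMap.congr_fun (hφ i) (v t j)

theorem IsPolynomialFamily.eventually_le {V : k → Submodule k A} (hV : IsPolynomialFamily V)
    {E : Submodule k A} [FiniteDimensional k E] (hVE : ∀ t, V t ≤ E) {t₀ : k} (h₀ : E ≤ V t₀) :
    ∀ᶠ t in cofinite, E ≤ V t := by
  -- Curves in the family through a basis of `E` at `t₀` have a coordinate determinant that is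
  -- polynomial in `t`, hence nonzero away from finitely many points.
  classical
  obtain ⟨S, hS⟩ := hV
  let e := Module.finBasis k E
  have lift_basis : ∀ i, ∃ F ∈ S, curveEval t₀ F = (e i : A) := fun i => by
    simpa only [hS, Submodule.mem_map] using h₀ (e i).2
  choose G hGS hG using lift_basis
  have hGV : ∀ t i, curveEval t (G i) ∈ V t := fun t i => by
    rw [hS]
    exact Submodule.mem_map_of_mem (hGS i)
  let v : k → Fin _ → E := fun t i => ⟨curveEval t (G i), hVE t (hGV t i)⟩
  obtain ⟨p, hp⟩ := exists_eval_eq_det_toMatrix e G v fun _ _ => rfl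
  have hp₀ : p.eval t₀ = 1 := by
    have : v t₀ = e := funext fun i => Subtype.ext (hG i)
    rw [hp, this, e.toMatrix_self, Matrix.det_one]
  have hp_ne : p ≠ 0 := by
    rintro rfl
    simp at hp₀
  have hroots : ∀ᶠ t in cofinite, p.eval t ≠ 0 :=
    (Polynomial.finite_setOfPred_isRoot hp_ne).eventually_cofinite_notMem
  filter_upwards [hroots] with t ht
  have hspan : Submodule.span k (Set.range (v t)) = ⊤ :=
    (e.is_basis_iff_det.2 (by rw [e.det_apply, ← hp]; exact ht.isUnit)).2
  calc E = (Submodule.span k (Set.range (v t))).map E.subtype := by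
        rw [hspan, Submodule.map_subtype_top]
    _ ≤ V t := by
        rw [Submodule.map_span_le]
        rintro _ ⟨i, rfl⟩
        exact hGV t i

end PolynomialFamilies

section LinearForms

variable {n : ℕ}

lemma lin_eq_linearCombination (v : Fin (n + 1) → ℂ) :
    lin v = Fintype.linearCombination ℂ X v := by
  simp [lin, Fintype.linearCombination_apply, smul_eq_C_mul]

lemma isHomogeneous_lin (v : Fin (n + 1) → ℂ) : (lin v).IsHomogeneous 1 :=
  IsHomogeneous.sum _ _ _ fun j _ => isHomogeneous_C_mul_X (v j) j

lemma lin_lineMap (v w : Fin (n + 1) → ℂ) (t : ℂ) :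
    lin (AffineMap.lineMap v w t) = AffineMap.lineMap (lin v) (lin w) t := by
  simp only [lin_eq_linearCombination, AffineMap.lineMap_apply_module, map_add, map_smul]

lemma rename_lin {k : ℕ} {f : Fin (k + 1) → Fin (n + 1)} (hf : f.Injective)
    (v : Fin (k + 1) → ℂ) :
    rename f (lin v) = lin (Function.ExtendByZero.linearMap ℂ f v) := by
  simp only [lin, map_sum, map_mul, rename_C, rename_X]
  refine Finset.sum_of_injOn f hf.injOn (by simp) (fun i _ hi => ?_) fun j _ => ?_
  · have : ¬∃ j, f j = i := by simpa using hi
    simp [Function.extend_apply' v (0 : Fin (n + 1) → ℂ) i this]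
  · simp [hf.extend_apply]

end LinearForms

section TangentCones

variable {n : ℕ}

lemma mulU_le_iff {f : MvPolynomial (Fin (n + 1)) ℂ}
    {P : Submodule ℂ (MvPolynomial (Fin (n + 1)) ℂ)} : mulU f ≤ P ↔ ∀ j, f * X j ∈ P := by
  rw [mulU, Submodule.span_le, Set.range_subset_iff]
  rfl

lemma mul_X_mem_mulU (f : MvPolynomial (Fin (n + 1)) ℂ) (j : Fin (n + 1)) : f * X j ∈ mulU f :=
  mulU_le_iff.1 le_rfl j

lemma mulU_le_homogeneousSubmodule {f : MvPolynomial (Fin (n + 1)) ℂ} {d : ℕ}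
    (hf : f.IsHomogeneous d) : mulU f ≤ homogeneousSubmodule (Fin (n + 1)) ℂ (d + 1) :=
  mulU_le_iff.2 fun j => hf.mul (isHomogeneous_X ℂ j)

lemma tanCone_le_homogeneousSubmodule {d : ℕ} (hd : 2 ≤ d) (ℓ m : Fin (n + 1) → ℂ) :
    tanCone d ℓ m ≤ homogeneousSubmodule (Fin (n + 1)) ℂ d := by
  obtain ⟨d, rfl⟩ := Nat.exists_eq_add_of_le' hd
  refine sup_le (mulU_le_homogeneousSubmodule ?_) (mulU_le_homogeneousSubmodule ?_)
  · simpa using (isHomogeneous_lin ℓ).pow (d + 1)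
  · simpa using ((isHomogeneous_lin ℓ).pow d).mul (isHomogeneous_lin m)

lemma map_rename_mulU_le {k : ℕ} (f : Fin (k + 1) → Fin (n + 1))
    (p : MvPolynomial (Fin (k + 1)) ℂ) :
    (mulU p).map (rename f).toLinearMap ≤ mulU (rename f p) := by
  rw [Submodule.map_le_iff_le_comap, mulU_le_iff]
  intro j
  simpa using mul_X_mem_mulU (rename f p) (f j)

lemma map_rename_tanCone_le {k : ℕ} {f : Fin (k + 1) → Fin (n + 1)} (hf : f.Injective) (d : ℕ)
    (ℓ m : Fin (k + 1) → ℂ) :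
    (tanCone d ℓ m).map (rename f).toLinearMap ≤
      tanCone d (Function.ExtendByZero.linearMap ℂ f ℓ)
        (Function.ExtendByZero.linearMap ℂ f m) := by
  rw [tanCone, tanCone, Submodule.map_sup]
  simpa only [map_mul, map_pow, rename_lin hf] using
    sup_le_sup (map_rename_mulU_le f (lin ℓ ^ (d - 1)))
      (map_rename_mulU_le f (lin ℓ ^ (d - 2) * lin m))

lemma isPolynomialFamily_mulU (F : Polynomial (MvPolynomial (Fin (n + 1)) ℂ)) :
    IsPolynomialFamily fun t : ℂ => mulU (curveEval t F) := by
  have h := IsPolynomialFamily.span (R := ℂ) fun j : Fin (n + 1) => F * Polynomial.C (X j)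
  simp only [curveEval_apply, Polynomial.eval_mul, Polynomial.eval_C] at h
  exact h

lemma exists_curveEval_eq_lin_lineMap (v w : Fin (n + 1) → ℂ) :
    ∃ F, ∀ t : ℂ, curveEval t F = lin (AffineMap.lineMap v w t) := by
  refine ⟨Polynomial.C (lin v) + Polynomial.X * Polynomial.C (lin w - lin v), fun t => ?_⟩
  rw [lin_lineMap, AffineMap.lineMap_apply_module', smul_eq_C_mul]
  simp only [curveEval_apply, algebraMap_eq, Polynomial.eval_add, Polynomial.eval_mul,
    Polynomial.eval_C, Polynomial.eval_X]
  ring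

lemma isPolynomialFamily_tanCone_lineMap (d : ℕ) (ℓ₀ ℓ₁ m₀ m₁ : Fin (n + 1) → ℂ) :
    IsPolynomialFamily fun t : ℂ =>
      tanCone d (AffineMap.lineMap ℓ₀ ℓ₁ t) (AffineMap.lineMap m₀ m₁ t) := by
  obtain ⟨F, hF⟩ := exists_curveEval_eq_lin_lineMap ℓ₀ ℓ₁
  obtain ⟨G, hG⟩ := exists_curveEval_eq_lin_lineMap m₀ m₁
  simpa only [tanCone, ← hF, ← hG, curveEval_apply, Polynomial.eval_pow, Polynomial.eval_mul] using
    (isPolynomialFamily_mulU (F ^ (d - 1))).sup (isPolynomialFamily_mulU (F ^ (d - 2) * G))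

lemma eventually_homogeneousSubmodule_le_sup_tanCone {ι : Type*} {d : ℕ} (hd : 2 ≤ d)
    {K : Submodule ℂ (MvPolynomial (Fin (n + 1)) ℂ)}
    (hK : K ≤ homogeneousSubmodule (Fin (n + 1)) ℂ d) {ℓ₀ ℓ₁ m₀ m₁ : ι → Fin (n + 1) → ℂ} {t₀ : ℂ}
    (h : homogeneousSubmodule (Fin (n + 1)) ℂ d ≤ K ⊔
      ⨆ i, tanCone d (AffineMap.lineMap (ℓ₀ i) (ℓ₁ i) t₀) (AffineMap.lineMap (m₀ i) (m₁ i) t₀)) :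
    ∀ᶠ t : ℂ in Filter.cofinite, homogeneousSubmodule (Fin (n + 1)) ℂ d ≤ K ⊔
      ⨆ i, tanCone d (AffineMap.lineMap (ℓ₀ i) (ℓ₁ i) t) (AffineMap.lineMap (m₀ i) (m₁ i) t) := by
  have : FiniteDimensional ℂ (homogeneousSubmodule (Fin (n + 1)) ℂ d) :=
    Module.Finite.of_fg (homogeneousSubmodule_fg _ _ _)
  exact ((IsPolynomialFamily.const K).sup <| .iSup fun i =>
    isPolynomialFamily_tanCone_lineMap d (ℓ₀ i) (ℓ₁ i) (m₀ i) (m₁ i)).eventually_le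
      (fun t => sup_le hK (iSup_le fun i => tanCone_le_homogeneousSubmodule hd _ _)) h

lemma exists_common_spanning_points {k d : ℕ} {ι : Type*} (hd : 2 ≤ d)
    (φ : (Fin (k + 1) → ℂ) →ₗ[ℂ] Fin (n + 1) → ℂ)
    {K : Submodule ℂ (MvPolynomial (Fin (n + 1)) ℂ)}
    (hK : K ≤ homogeneousSubmodule (Fin (n + 1)) ℂ d)
    {K' : Submodule ℂ (MvPolynomial (Fin (k + 1)) ℂ)}
    (hK' : K' ≤ homogeneousSubmodule (Fin (k + 1)) ℂ d) {p q u v : ι → Fin (k + 1) → ℂ}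
    (h : homogeneousSubmodule (Fin (n + 1)) ℂ d ≤ K ⊔ ⨆ i, tanCone d (φ (p i)) (φ (q i)))
    (h' : homogeneousSubmodule (Fin (k + 1)) ℂ d ≤ K' ⊔ ⨆ i, tanCone d (u i) (v i)) :
    ∃ x y : ι → Fin (k + 1) → ℂ,
      homogeneousSubmodule (Fin (n + 1)) ℂ d ≤ K ⊔ ⨆ i, tanCone d (φ (x i)) (φ (y i)) ∧
        homogeneousSubmodule (Fin (k + 1)) ℂ d ≤ K' ⊔ ⨆ i, tanCone d (x i) (y i) := by
  have hφ : ∀ a b (t : ℂ), φ (AffineMap.lineMap a b t) = AffineMap.lineMap (φ a) (φ b) t :=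
    φ.toAffineMap.apply_lineMap
  have ev : ∀ᶠ t : ℂ in Filter.cofinite, homogeneousSubmodule (Fin (n + 1)) ℂ d ≤
      K ⊔ ⨆ i, tanCone d (φ (AffineMap.lineMap (p i) (u i) t))
        (φ (AffineMap.lineMap (q i) (v i) t)) := by
    simp only [hφ]
    refine eventually_homogeneousSubmodule_le_sup_tanCone hd hK (t₀ := 0) ?_
    simpa only [AffineMap.lineMap_apply_zero] using h
  have ev' : ∀ᶠ t : ℂ in Filter.cofinite, homogeneousSubmodule (Fin (k + 1)) ℂ d ≤
      K' ⊔ ⨆ i, tanCone d (AffineMap.lineMap (p i) (u i) t)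
        (AffineMap.lineMap (q i) (v i) t) := by
    refine eventually_homogeneousSubmodule_le_sup_tanCone hd hK' (t₀ := 1) ?_
    simpa only [AffineMap.lineMap_apply_one] using h'
  obtain ⟨t, ht, ht'⟩ := (ev.and ev').exists
  exact ⟨_, _, ht, ht'⟩

end TangentCones

section Wspace

variable {n r s : ℕ} {a b : Fin 3 → ℕ}

lemma Wspace_le_iff {ℓ m : Fin s → Fin (n + 1) → ℂ}
    {L M : (i : Fin 3) → Fin (a i) → Fin (n + 1) → ℂ}
    {P : Submodule ℂ (MvPolynomial (Fin (n + 1)) ℂ)} :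
    Wspace ℓ m L M ≤ P ↔ (∀ i, a i ≠ 0 → S3U i ≤ P) ∧
      (∀ i j, tanCone 3 (L i j) (M i j) ≤ P) ∧ ∀ i, tanCone 3 (ℓ i) (m i) ≤ P := by
  simp only [Wspace, sup_le_iff, iSup_le_iff, Subtype.forall]
  refine ⟨fun ⟨hblock, hfree⟩ => ⟨fun i hi => (hblock i hi).1, fun i j => ?_, hfree⟩,
    fun ⟨hS, hblock, hfree⟩ => ⟨fun i hi => ⟨hS i hi, hblock i⟩, hfree⟩⟩
  exact (hblock i fun h => (Fin.cast h j).elim0).2 j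

lemma S3U_le_homogeneousSubmodule (i : Fin 3) :
    S3U i ≤ homogeneousSubmodule (Fin (n + 1)) ℂ 3 := by
  rw [S3U, Submodule.span_le]
  rintro _ ⟨a, b, c, -, -, -, rfl⟩
  exact ((isHomogeneous_lin a).mul (isHomogeneous_lin b)).mul (isHomogeneous_lin c)

lemma Wspace_le_homogeneousSubmodule (ℓ m : Fin s → Fin (n + 1) → ℂ)
    (L M : (i : Fin 3) → Fin (a i) → Fin (n + 1) → ℂ) :
    Wspace ℓ m L M ≤ homogeneousSubmodule (Fin (n + 1)) ℂ 3 :=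
  Wspace_le_iff.2 ⟨fun i _ => S3U_le_homogeneousSubmodule i,
    fun _ _ => tanCone_le_homogeneousSubmodule (by norm_num) _ _,
    fun _ => tanCone_le_homogeneousSubmodule (by norm_num) _ _⟩

lemma Wspace_add (ℓ m : Fin (r + s) → Fin (n + 1) → ℂ)
    (L M : (i : Fin 3) → Fin ((a + b) i) → Fin (n + 1) → ℂ) :
    Wspace ℓ m L M =
      Wspace (fun i => ℓ (Fin.castAdd s i)) (fun i => m (Fin.castAdd s i))
          (fun i (j : Fin (a i)) => L i (Fin.castAdd (b i) j))
          (fun i (j : Fin (a i)) => M i (Fin.castAdd (b i) j)) ⊔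
        Wspace (fun i => ℓ (Fin.natAdd r i)) (fun i => m (Fin.natAdd r i))
          (fun i (j : Fin (b i)) => L i (Fin.natAdd (a i) j))
          (fun i (j : Fin (b i)) => M i (Fin.natAdd (a i) j)) := by
  refine eq_of_forall_ge_iff fun P => ?_
  have ne_zero_iff : ∀ i, (a + b) i ≠ 0 ↔ a i ≠ 0 ∨ b i ≠ 0 := fun i => by
    rw [Pi.add_apply]
    lia
  have forall_block : (∀ i j, tanCone 3 (L i j) (M i j) ≤ P) ↔
      ∀ i, (∀ j, tanCone 3 (L i (Fin.castAdd (b i) j)) (M i (Fin.castAdd (b i) j)) ≤ P) ∧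
        ∀ j, tanCone 3 (L i (Fin.natAdd (a i) j)) (M i (Fin.natAdd (a i) j)) ≤ P :=
    forall_congr' fun i => Fin.forall_fin_add (m := a i) (n := b i) _
  rw [sup_le_iff, Wspace_le_iff, Wspace_le_iff, Wspace_le_iff, forall_block,
    Fin.forall_fin_add]
  simp only [ne_zero_iff, or_imp, forall_and]
  tauto

lemma Wspace_append (ℓ m : Fin r → Fin (n + 1) → ℂ) (u v : Fin s → Fin (n + 1) → ℂ)
    (L M : (i : Fin 3) → Fin (a i) → Fin (n + 1) → ℂ)
    (L' M' : (i : Fin 3) → Fin (b i) → Fin (n + 1) → ℂ) :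
    Wspace (a := a + b) (Fin.append ℓ u) (Fin.append m v) (fun i => Fin.append (L i) (L' i))
      (fun i => Fin.append (M i) (M' i)) = Wspace ℓ m L M ⊔ Wspace u v L' M' := by
  simp only [Wspace_add, Fin.append_left, Fin.append_right]

lemma Wspace_single_le (ℓ m : Fin 0 → Fin (n + 1) → ℂ) {i : Fin 3}
    (L M : (j : Fin 3) → Fin ((Pi.single i s : Fin 3 → ℕ) j) → Fin (n + 1) → ℂ) :
    Wspace ℓ m L M ≤ S3U i ⊔ ⨆ j : Fin s, tanCone 3
      (L i (Fin.cast (Pi.single_eq_same (M := fun _ => ℕ) i s).symm j))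
      (M i (Fin.cast (Pi.single_eq_same (M := fun _ => ℕ) i s).symm j)) := by
  have eq_of_ne_zero : ∀ j, (Pi.single i s : Fin 3 → ℕ) j ≠ 0 → j = i := fun j hj =>
    of_not_not fun h => hj (Pi.single_eq_of_ne (M := fun _ => ℕ) h s)
  refine Wspace_le_iff.2 ⟨fun j hj => ?_, fun j x => ?_, fun j => j.elim0⟩
  · rw [eq_of_ne_zero j hj]
    exact le_sup_left
  · obtain rfl := eq_of_ne_zero j x.pos.ne'
    exact le_sup_of_le_right <|
      le_iSup_of_le (Fin.cast (Pi.single_eq_same (M := fun _ => ℕ) j s) x) le_rfl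

end Wspace

section SpansCubics

/-- The subspace `W(n, s; a₁, a₂, a₃)` of some admissible choice of points is the whole space of
cubics in `n + 1` variables. This is `TStmt n s a` whenever the expected dimension is that of the
space of all cubics. -/
def SpansCubics (n s : ℕ) (a : Fin 3 → ℕ) : Prop :=
  ∃ (ℓ m : Fin s → Fin (n + 1) → ℂ) (L M : (i : Fin 3) → Fin (a i) → Fin (n + 1) → ℂ),
    (∀ i j, memU i (L i j) ∧ memU i (M i j)) ∧
      Wspace ℓ m L M = homogeneousSubmodule (Fin (n + 1)) ℂ 3

variable {n r s : ℕ} {a : Fin 3 → ℕ}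

lemma finrank_homogeneousSubmodule (σ R : Type*) [Fintype σ] [CommRing R] [Nontrivial R] (d : ℕ) :
    Module.finrank R (homogeneousSubmodule σ R d) = (Fintype.card σ + d - 1).choose d := by
  classical
  have hcard : Nat.card {m : σ →₀ ℕ | m.degree = d} = (Fintype.card σ + d - 1).choose d := by
    have : {m : σ →₀ ℕ | m.degree = d} = (Finset.univ.finsuppAntidiag d : Finset (σ →₀ ℕ)) := by
      ext m
      simp [Finsupp.degree_eq_sum]
    rw [this, Nat.card_coe_set_eq, Set.ncard_coe_finset,
      Finset.card_finsuppAntidiag_nat_eq_choose, Finset.card_univ]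
  rw [homogeneousSubmodule_eq_finsupp_supported, ← hcard]
  exact Module.finrank_eq_nat_card_basis (basisRestrictSupport R _)

lemma finrank_homogeneousSubmodule_three (n : ℕ) :
    Module.finrank ℂ (homogeneousSubmodule (Fin (n + 1)) ℂ 3) = (n + 3).choose 3 := by
  rw [finrank_homogeneousSubmodule, Fintype.card_fin]
  rfl

lemma tStmt_iff_spansCubics (h : expdimZ n s a = (n + 3).choose 3) :
    TStmt n s a ↔ SpansCubics n s a := by
  have : FiniteDimensional ℂ (homogeneousSubmodule (Fin (n + 1)) ℂ 3) :=
    Module.Finite.of_fg (homogeneousSubmodule_fg _ _ _)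
  have finrank_eq_iff : ∀ ℓ m L M, (Module.finrank ℂ (Wspace (n := n) (s := s) (a := a) ℓ m L M)
      : ℤ) = expdimZ n s a ↔ Wspace ℓ m L M = homogeneousSubmodule (Fin (n + 1)) ℂ 3 := by
    intro ℓ m L M
    rw [h, Nat.cast_inj, ← finrank_homogeneousSubmodule_three]
    exact ⟨Submodule.eq_of_le_of_finrank_eq (Wspace_le_homogeneousSubmodule ℓ m L M),
      fun h => by rw [h]⟩
  simp only [TStmt, SpansCubics, finrank_eq_iff]

lemma SpansCubics.exists_sup_tanCone {i : Fin 3} (h : SpansCubics n r (a + Pi.single i s)) :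
    ∃ (ℓ m : Fin r → Fin (n + 1) → ℂ) (L M : (i : Fin 3) → Fin (a i) → Fin (n + 1) → ℂ)
      (p q : Fin s → Fin (n + 1) → ℂ),
      (∀ i j, memU i (L i j) ∧ memU i (M i j)) ∧ (∀ j, memU i (p j)) ∧ (∀ j, memU i (q j)) ∧
        homogeneousSubmodule (Fin (n + 1)) ℂ 3 ≤
          (Wspace ℓ m L M ⊔ S3U i) ⊔ ⨆ j, tanCone 3 (p j) (q j) := by
  obtain ⟨ℓ, m, L, M, hU, hW⟩ := h
  let last : Fin s → Fin ((a + Pi.single i s : Fin 3 → ℕ) i) := fun j =>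
    Fin.natAdd (a i) (Fin.cast (Pi.single_eq_same (M := fun _ => ℕ) i s).symm j)
  refine ⟨ℓ, m, fun i j => L i (Fin.castAdd _ j), fun i j => M i (Fin.castAdd _ j),
    fun j => L i (last j), fun j => M i (last j), fun i j => hU i _, fun j => (hU i _).1,
    fun j => (hU i _).2, ?_⟩
  rw [← hW, Wspace_add (s := 0) ℓ m L M, sup_assoc]
  exact sup_le_sup_left (Wspace_single_le _ _ _ _) _

end SpansCubics

section SkipBlock

/-- The order embedding of indices whose range misses the third block `{48, …, 71}`. It identifies
the linear forms in `m + 1` variables with `U₃` inside those in `m + 25` variables. -/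
def skipBlock (m : ℕ) (j : Fin (m + 1)) : Fin (m + 24 + 1) :=
  ⟨if (j : ℕ) < 48 then j else j + 24, by split <;> omega⟩

variable {m : ℕ}

lemma skipBlock_injective : (skipBlock m).Injective := fun i j h => by
  simp only [skipBlock, Fin.mk.injEq] at h
  ext
  split_ifs at h <;> omega

lemma exists_skipBlock_eq (hm : 47 ≤ m) {k : Fin (m + 24 + 1)} (hk : (k : ℕ) < 48 ∨ 72 ≤ (k : ℕ)) :
    ∃ j, skipBlock m j = k := by
  rcases hk with hk | hk
  · exact ⟨⟨k, by omega⟩, by simp [skipBlock, hk]⟩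
  · refine ⟨⟨k - 24, by omega⟩, Fin.ext ?_⟩
    simp only [skipBlock]
    split <;> omega

/-- Extension of coefficient vectors by zero along `skipBlock m`. -/
noncomputable def extendSkip (m : ℕ) : (Fin (m + 1) → ℂ) →ₗ[ℂ] Fin (m + 24 + 1) → ℂ :=
  Function.ExtendByZero.linearMap ℂ (skipBlock m)

lemma memU_extendSkip {i : Fin 3} {v : Fin (m + 1) → ℂ} (hv : memU i v) :
    memU i (extendSkip m v) := by
  intro k hk hk'
  by_cases hex : ∃ j, skipBlock m j = k
  · obtain ⟨j, rfl⟩ := hex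
    refine (skipBlock_injective.extend_apply v 0 j).trans (hv j ?_ ?_) <;>
      simp only [skipBlock] at hk hk' <;> split_ifs at hk hk' <;> omega
  · exact Function.extend_apply' _ _ _ hex

lemma exists_extendSkip_eq (hm : 47 ≤ m) {v : Fin (m + 24 + 1) → ℂ} (hv : memU 2 v) :
    ∃ w, extendSkip m w = v := by
  refine ⟨v ∘ skipBlock m, funext fun k => ?_⟩
  by_cases hex : ∃ j, skipBlock m j = k
  · obtain ⟨j, rfl⟩ := hex
    exact skipBlock_injective.extend_apply _ _ j
  · refine (Function.extend_apply' _ _ _ hex).trans (hv k ?_ ?_).symm <;>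
      · by_contra hk
        refine hex (exists_skipBlock_eq hm ?_)
        simp only [Fin.val_two] at hk
        omega

lemma rename_skipBlock_lin (v : Fin (m + 1) → ℂ) :
    rename (skipBlock m) (lin v) = lin (extendSkip m v) :=
  rename_lin skipBlock_injective v

lemma map_rename_skipBlock_S3U_le (i : Fin 3) :
    (S3U i).map (rename (skipBlock m)).toLinearMap ≤ S3U i := by
  rw [S3U, Submodule.map_span_le]
  rintro _ ⟨a, b, c, ha, hb, hc, rfl⟩
  refine Submodule.subset_span ⟨_, _, _, memU_extendSkip ha, memU_extendSkip hb,
    memU_extendSkip hc, ?_⟩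
  simp only [AlgHom.toLinearMap_apply, map_mul, rename_skipBlock_lin]

lemma S3U_two_le_map_rename_skipBlock (hm : 47 ≤ m) :
    S3U 2 ≤ (homogeneousSubmodule (Fin (m + 1)) ℂ 3).map (rename (skipBlock m)).toLinearMap := by
  rw [S3U, Submodule.span_le]
  rintro _ ⟨a, b, c, ha, hb, hc, rfl⟩
  obtain ⟨a, rfl⟩ := exists_extendSkip_eq hm ha
  obtain ⟨b, rfl⟩ := exists_extendSkip_eq hm hb
  obtain ⟨c, rfl⟩ := exists_extendSkip_eq hm hc
  refine ⟨lin a * lin b * lin c,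
    ((isHomogeneous_lin a).mul (isHomogeneous_lin b)).mul (isHomogeneous_lin c), ?_⟩
  simp only [AlgHom.toLinearMap_apply, map_mul, rename_skipBlock_lin]

lemma map_rename_skipBlock_Wspace_le {s : ℕ} {a : Fin 3 → ℕ} (u v : Fin s → Fin (m + 1) → ℂ)
    (L M : (i : Fin 3) → Fin (a i) → Fin (m + 1) → ℂ) :
    (Wspace u v L M).map (rename (skipBlock m)).toLinearMap ≤
      Wspace (fun i => extendSkip m (u i)) (fun i => extendSkip m (v i))
        (fun i j => extendSkip m (L i j)) (fun i j => extendSkip m (M i j)) := by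
  obtain ⟨hS, hblock, hfree⟩ := Wspace_le_iff.1 <| le_refl <| Wspace
    (fun i => extendSkip m (u i)) (fun i => extendSkip m (v i))
    (fun i j => extendSkip m (L i j)) (fun i j => extendSkip m (M i j))
  have map_tanCone_le := map_rename_tanCone_le (skipBlock_injective (m := m)) 3
  rw [Submodule.map_le_iff_le_comap, Wspace_le_iff]
  simp only [← Submodule.map_le_iff_le_comap]
  exact ⟨fun i hi => (map_rename_skipBlock_S3U_le i).trans (hS i hi),
    fun i j => (map_tanCone_le (L i j) (M i j)).trans (hblock i j),
    fun i => (map_tanCone_le (u i) (v i)).trans (hfree i)⟩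

end SkipBlock

lemma SpansCubics.glue {m r s : ℕ} {a b : Fin 3 → ℕ} (hm : 47 ≤ m)
    (h₁ : SpansCubics (m + 24) r (a + Pi.single 2 s)) (h₂ : SpansCubics m s b) :
    SpansCubics (m + 24) (r + s) (a + b) := by
  obtain ⟨ℓ, n, L, M, p, q, hU, hp, hq, hspan⟩ := h₁.exists_sup_tanCone
  obtain ⟨u, v, L', M', hU', hspan'⟩ := h₂
  choose p hp using fun j => exists_extendSkip_eq hm (hp j)
  choose q hq using fun j => exists_extendSkip_eq hm (hq j)
  simp only [← hp, ← hq] at hspan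
  obtain ⟨x, y, hxy, hxy'⟩ := exists_common_spanning_points (by norm_num) (extendSkip m)
    (sup_le (Wspace_le_homogeneousSubmodule ℓ n L M) (S3U_le_homogeneousSubmodule 2))
    (le_sup_left.trans hspan'.le) hspan hspan'.ge
  let L₂ := fun i j => extendSkip m (L' i j)
  let M₂ := fun i j => extendSkip m (M' i j)
  refine ⟨Fin.append ℓ fun j => extendSkip m (x j), Fin.append n fun j => extendSkip m (y j),
    fun i => Fin.append (L i) (L₂ i), fun i => Fin.append (M i) (M₂ i), fun i => ?_,
    le_antisymm (Wspace_le_homogeneousSubmodule _ _ _ _) ?_⟩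
  · refine (Fin.forall_fin_add (m := a i) (n := b i) _).2 ?_
    simp only [Fin.append_left, Fin.append_right]
    exact ⟨hU i, fun j => ⟨memU_extendSkip (hU' i j).1, memU_extendSkip (hU' i j).2⟩⟩
  · have hS : S3U 2 ≤ Wspace (fun j => extendSkip m (x j)) (fun j => extendSkip m (y j)) L₂ M₂ :=
      calc S3U 2 ≤ (homogeneousSubmodule (Fin (m + 1)) ℂ 3).map
            (rename (skipBlock m)).toLinearMap := S3U_two_le_map_rename_skipBlock hm
        _ ≤ (Wspace x y L' M').map (rename (skipBlock m)).toLinearMap := Submodule.map_mono hxy'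
        _ ≤ _ := map_rename_skipBlock_Wspace_le x y L' M'
    rw [Wspace_append]
    exact hxy.trans (sup_le (sup_le_sup_left hS _) (le_sup_of_le_right le_sup_right))

section ExpectedDimension

lemma six_mul_cast_choose_three (k : ℕ) : 6 * (k.choose 3 : ℤ) = k * (k - 1) * (k - 2) :=
  calc 6 * (k.choose 3 : ℤ) = (k.descFactorial 3 : ℕ) := by
        rw [Nat.descFactorial_eq_factorial_mul_choose, Nat.cast_mul]
        rfl
    _ = k * (k - 1) * (k - 2) := by
        rw [← descPochhammer_eval_eq_descFactorial]
        simp [descPochhammer_succ_eval]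

lemma altsum_two_add {n : ℕ} (hn : 45 ≤ n) :
    altsum n 2 + 576 * (n - 22) = (n + 3).choose 3 := by
  have halt : altsum n 2 = 2 * (n + 3 - 24).choose 3 - (n + 3 - 48).choose 3 := by
    simp [altsum, Finset.sum_Icc_succ_top, sub_eq_add_neg]
  have h₀ := six_mul_cast_choose_three (n + 3)
  have h₁ := six_mul_cast_choose_three (n + 3 - 24)
  have h₂ := six_mul_cast_choose_three (n + 3 - 48)
  rw [Nat.cast_sub (by lia)] at h₁ h₂
  push_cast at halt h₀ h₁ h₂
  linarith

lemma altsum_three_add {n : ℕ} (hn : 69 ≤ n) : altsum n 3 + 24 ^ 3 = (n + 3).choose 3 := by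
  have halt : altsum n 3 =
      3 * (n + 3 - 24).choose 3 - 3 * (n + 3 - 48).choose 3 + (n + 3 - 72).choose 3 := by
    simp [altsum, Finset.sum_Icc_succ_top, sub_eq_add_neg]
  have h₀ := six_mul_cast_choose_three (n + 3)
  have h₁ := six_mul_cast_choose_three (n + 3 - 24)
  have h₂ := six_mul_cast_choose_three (n + 3 - 48)
  have h₃ := six_mul_cast_choose_three (n + 3 - 72)
  rw [Nat.cast_sub (by lia)] at h₁ h₂ h₃
  push_cast at halt h₀ h₁ h₂ h₃
  linarith

lemma expdimZ_three_blocks {n : ℕ} (hn : 69 ≤ n) :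
    expdimZ n 0 ![96, 96, 96] = (n + 3).choose 3 := by
  have hk : kcount ![96, 96, 96] = 3 := by decide
  rw [expdimZ, hk]
  refine min_eq_right (le_of_eq ?_)
  rw [← altsum_three_add hn]
  simp

lemma expdimZ_two_blocks {n : ℕ} (hn : 45 ≤ n) :
    expdimZ n 96 ![tfun (n - 24), tfun (n - 24), 0] = (n + 3).choose 3 := by
  have ht : (tfun (n - 24) : ℤ) = 4 * n - 133 := by
    rw [tfun]
    lia
  have hk : kcount ![tfun (n - 24), tfun (n - 24), 0] = 2 := by
    have : tfun (n - 24) ≠ 0 := by lia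
    simp [kcount, Finset.card_filter, Fin.sum_univ_three, this]
  rw [expdimZ, hk]
  refine min_eq_right (le_of_eq ?_)
  rw [← altsum_two_add hn]
  simp only [Matrix.cons_val]
  push_cast
  rw [ht]
  ring

end ExpectedDimension

theorem induction_step_iii_general (n : ℕ) (hn : 71 ≤ n)
    (h1 : TStmt n 0 ![96, 96, 96])
    (h2 : TStmt (n - 24) 96 ![tfun (n - 48), tfun (n - 48), 0]) :
    TStmt n 96 ![tfun (n - 24), tfun (n - 24), 0] := by
  obtain ⟨m, rfl⟩ := Nat.exists_eq_add_of_le' (show 24 ≤ n by lia)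
  have ht : tfun m = 96 + tfun (m - 24) := by
    simp only [tfun]
    lia
  have h₁ : SpansCubics (m + 24) 0 (![96, 96, 0] + Pi.single 2 96) := by
    have hblocks : ![96, 96, 0] + Pi.single 2 96 = ![96, 96, 96] := by decide
    rw [hblocks]
    exact (tStmt_iff_spansCubics (expdimZ_three_blocks (by lia))).1 h1
  have h₂ : SpansCubics m 96 ![tfun (m - 24), tfun (m - 24), 0] :=
    (tStmt_iff_spansCubics (expdimZ_two_blocks (by lia))).1 h2
  rw [tStmt_iff_spansCubics (expdimZ_two_blocks (by lia)), Nat.add_sub_cancel]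
  simpa [ht] using h₁.glue (by lia) h₂

/-- Proposition 3.7 (iii): for `n ≥ 80`, truth of `T(n, 0; 96, 96, 96)` and of
`T(n−24, 96; t(n−48), t(n−48), 0)` implies truth of `T(n, 96; t(n−24), t(n−24), 0)`. -/
theorem induction_step_iii (n : ℕ) (hn : 80 ≤ n)
    (h1 : TStmt n 0 ![96, 96, 96])
    (h2 : TStmt (n - 24) 96 ![tfun (n - 48), tfun (n - 48), 0]) :
    TStmt n 96 ![tfun (n - 24), tfun (n - 24), 0] :=
  induction_step_iii_general n (by lia) h1 h2
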